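/- arXiv:1909.08345 — 2 statements merged into one kernel-verified Lean document; each statement's English description precedes it below -/
import Mathlib

section
/- Let E, A, R_x, R_z be h×h real matrices with R_x and R_z invertible, B an h×k real matrix, C an l×h real matrix, M a k×k real symmetric positive definite matrix, and 0 < λ_min ≤ λ real numbers. Set K_u = −(1/2)·Bᵀ·R_z⁻¹ and K_z = −(1/(2λ_min))·R_x⁻ᵀ·Cᵀ. Assume: (i) EᵀR_x = R_xᵀE ⪰ 0; (ii) R_zᵀEᵀ = E·R_z ⪰ 0; (iii) the symmetric 3×3 block matrix Θ(λ) with upper blocks Θ₁₁ = A·R_z + R_zᵀAᵀ − B·Bᵀ, Θ₁₂ = −(λ/(2λ_min))·R_x⁻ᵀ·CᵀC, Θ₁₃ = (1/2)·B·M, Θ₂₂ = R_xᵀA + AᵀR_x − CᵀC, Θ₂₃ = 0, Θ₃₃ = −M (lower blocks being the transposes) satisfies Θ(λ) ≺ 0. Let ẑ, x̂ : ℝ → ℝ^h be differentiable functions satisfying, for all t, E·ẑ′(t) = (A + B·K_u)·ẑ(t) + λ·K_z·C·x̂(t) and E·x̂′(t) = (A + λ·K_z·C)·x̂(t). Then V(t)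 := x̂(t)ᵀ(EᵀR_x)x̂(t) + ẑ(t)ᵀ(Eᵀ·R_z⁻¹)ẑ(t) is differentiable and satisfies V′(t) ≤ −(K_u·ẑ(t))ᵀ·M·(K_u·ẑ(t)) for all t. -/
open Matrix

/-- The symmetric 3×3 block matrix `Θ(μ)` of the paper's Theorem 2, with blocks of
sizes `h, h, k`:
`Θ₁₁ = A R_z + R_zᵀ Aᵀ − B Bᵀ`, `Θ₁₂ = −(μ/(2λ_min)) R_x⁻ᵀ CᵀC`, `Θ₁₃ = (1/2) B M`,
`Θ₂₂ = R_xᵀ A + Aᵀ R_x − CᵀC`, `Θ₂₃ = 0`, `Θ₃₃ = −M`, lower blocks the transposes. -/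
noncomputable def Theta {h k l : ℕ}
    (A Rx Rz : Matrix (Fin h) (Fin h) ℝ)
    (B : Matrix (Fin h) (Fin k) ℝ) (C : Matrix (Fin l) (Fin h) ℝ)
    (M : Matrix (Fin k) (Fin k) ℝ) (lmin mu : ℝ) :
    Matrix ((Fin h ⊕ Fin h) ⊕ Fin k) ((Fin h ⊕ Fin h) ⊕ Fin k) ℝ :=
  Matrix.fromBlocks
    (Matrix.fromBlocks (A * Rz + Rzᵀ * Aᵀ - B * Bᵀ)
      (-(mu / (2 * lmin)) • ((Rx⁻¹)ᵀ * (Cᵀ * C)))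
      (-(mu / (2 * lmin)) • ((Rx⁻¹)ᵀ * (Cᵀ * C)))ᵀ
      (Rxᵀ * A + Aᵀ * Rx - Cᵀ * C))
    (Matrix.fromRows ((1 / 2 : ℝ) • (B * M)) 0)
    (Matrix.fromCols ((1 / 2 : ℝ) • (B * M))ᵀ 0)
    (-M)

/-! Put `w = R_z⁻¹ ẑ` and `u = K_u ẑ = -½ Bᵀ w`. Symmetry of `Eᵀ R_x` and `Eᵀ R_z⁻¹` lets both
terms of `V` be differentiated as `d/dt (xᵀ Eᵀ P x) = 2 (P x)ᵀ E x'`, so that `E x'` can be replaced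
by the right-hand side of the dynamics. Evaluating `Θ(λ)` at `ξ = (w, x̂, -u)` then gives the exact
power balance
`V' = ξᵀ Θ(λ) ξ - uᵀ M u - (λ / λ_min - 1) |C x̂|²`,
whose first and last terms are nonpositive. -/

lemma isSymm_transpose_mul_inv {n α : Type*} [Fintype n] [DecidableEq n] [CommRing α]
    {E R : Matrix n n α} (hR : IsUnit R.det) (hER : (E * R).IsSymm) : (Eᵀ * R⁻¹).IsSymm := by
  have hRT : IsUnit Rᵀ.det := isUnit_det_transpose R hR
  calc (Eᵀ * R⁻¹)ᵀ = Rᵀ⁻¹ * E := by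
        rw [transpose_mul, transpose_transpose, transpose_nonsing_inv]
    _ = Rᵀ⁻¹ * (E * R) * R⁻¹ := by rw [← Matrix.mul_assoc, mul_nonsing_inv_cancel_right R _ hR]
    _ = Rᵀ⁻¹ * (Rᵀ * Eᵀ) * R⁻¹ := by rw [← transpose_mul, hER.eq]
    _ = Eᵀ * R⁻¹ := by rw [nonsing_inv_mul_cancel_left Rᵀ _ hRT]

section DescriptorStorage

variable {𝕜 m n : Type*} [NontriviallyNormedField 𝕜] [Fintype n] {t : 𝕜}

lemma hasDerivAt_dotProduct {f g : 𝕜 → n → 𝕜} {f' g' : n → 𝕜}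
    (hf : HasDerivAt f f' t) (hg : HasDerivAt g g' t) :
    HasDerivAt (fun s ↦ f s ⬝ᵥ g s) (f' ⬝ᵥ g t + f t ⬝ᵥ g') t := by
  simp only [dotProduct, ← Finset.sum_add_distrib]
  exact .fun_sum fun i _ ↦ (hasDerivAt_pi.1 hf i).mul (hasDerivAt_pi.1 hg i)

lemma hasDerivAt_mulVec (N : Matrix m n 𝕜) {x : 𝕜 → n → 𝕜} {x' : n → 𝕜}
    (hx : HasDerivAt x x' t) : HasDerivAt (fun s ↦ N *ᵥ x s) (N *ᵥ x') t :=
  hasDerivAt_pi.2 fun i ↦ by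
    simpa only [mulVec, zero_dotProduct, zero_add] using
      hasDerivAt_dotProduct (hasDerivAt_const t (N i)) hx

lemma hasDerivAt_dotProduct_transpose_mul_mulVec_self [Fintype m] {E P : Matrix m n 𝕜}
    (hEP : (Eᵀ * P).IsSymm) {x : 𝕜 → n → 𝕜} {x' : n → 𝕜} (hx : HasDerivAt x x' t) :
    HasDerivAt (fun s ↦ x s ⬝ᵥ (Eᵀ * P) *ᵥ x s) (2 * (P *ᵥ x t ⬝ᵥ E *ᵥ x')) t := by
  have hright : x t ⬝ᵥ (Eᵀ * P) *ᵥ x' = x' ⬝ᵥ (Eᵀ * P) *ᵥ x t := by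
    rw [← dotProduct_transpose_mulVec, hEP.eq]
  have hleft : x' ⬝ᵥ (Eᵀ * P) *ᵥ x t = P *ᵥ x t ⬝ᵥ E *ᵥ x' := by
    rw [← mulVec_mulVec, dotProduct_transpose_mulVec]
  convert hasDerivAt_dotProduct hx (hasDerivAt_mulVec (Eᵀ * P) hx) using 1
  rw [hright, hleft, two_mul]

end DescriptorStorage

section PowerBalance

variable {h k l : ℕ} {A Rx Rz : Matrix (Fin h) (Fin h) ℝ} {B : Matrix (Fin h) (Fin k) ℝ}
  {C : Matrix (Fin l) (Fin h) ℝ} {M : Matrix (Fin k) (Fin k) ℝ} {lmin lam : ℝ}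

lemma dotProduct_Theta_mulVec (w x : Fin h → ℝ) (y : Fin k → ℝ) :
    Sum.elim (Sum.elim w x) y ⬝ᵥ Theta A Rx Rz B C M lmin lam *ᵥ Sum.elim (Sum.elim w x) y =
      2 * (w ⬝ᵥ A *ᵥ (Rz *ᵥ w)) - Bᵀ *ᵥ w ⬝ᵥ Bᵀ *ᵥ w
        - lam / lmin * (C *ᵥ (Rx⁻¹ *ᵥ w) ⬝ᵥ C *ᵥ x) + Bᵀ *ᵥ w ⬝ᵥ M *ᵥ y
        + 2 * (Rx *ᵥ x ⬝ᵥ A *ᵥ x) - C *ᵥ x ⬝ᵥ C *ᵥ x - y ⬝ᵥ M *ᵥ y := by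
  have hAz : w ⬝ᵥ (Rzᵀ * Aᵀ) *ᵥ w = w ⬝ᵥ A *ᵥ (Rz *ᵥ w) := by
    rw [← transpose_mul, dotProduct_transpose_mulVec, mulVec_mulVec]
  have hRA : x ⬝ᵥ (Rxᵀ * A) *ᵥ x = Rx *ᵥ x ⬝ᵥ A *ᵥ x := by
    rw [← mulVec_mulVec, dotProduct_transpose_mulVec, dotProduct_comm]
  have hAR : x ⬝ᵥ (Aᵀ * Rx) *ᵥ x = Rx *ᵥ x ⬝ᵥ A *ᵥ x := by
    rw [← mulVec_mulVec, dotProduct_transpose_mulVec]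
  have hB (v : Fin k → ℝ) : w ⬝ᵥ B *ᵥ v = Bᵀ *ᵥ w ⬝ᵥ v := by
    rw [dotProduct_mulVec, mulVec_transpose]
  have hC (v : Fin h → ℝ) : v ⬝ᵥ (Cᵀ * C) *ᵥ x = C *ᵥ v ⬝ᵥ C *ᵥ x := by
    rw [← mulVec_mulVec, dotProduct_transpose_mulVec, dotProduct_comm]
  have hRC : w ⬝ᵥ ((Rx⁻¹)ᵀ * (Cᵀ * C)) *ᵥ x = C *ᵥ (Rx⁻¹ *ᵥ w) ⬝ᵥ C *ᵥ x := by
    rw [← mulVec_mulVec, dotProduct_transpose_mulVec, dotProduct_comm, hC]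
  simp only [Theta, fromBlocks_mulVec, Sum.elim_comp_inl, Sum.elim_comp_inr, fromRows_mulVec,
    fromCols_mulVec, sumElim_dotProduct_sumElim, dotProduct_add, dotProduct_sub, dotProduct_neg,
    dotProduct_smul, dotProduct_zero, dotProduct_transpose_mulVec, add_mulVec, sub_mulVec,
    neg_mulVec, smul_mulVec, zero_mulVec, smul_eq_mul, add_zero, hAz, hRA, hAR, hC, hRC]
  simp only [← mulVec_mulVec, hB]
  ring

lemma storage_rate_eq_Theta_form_sub (hRx : IsUnit Rx.det) (hRz : IsUnit Rz.det)
    {Ku : Matrix (Fin k) (Fin h) ℝ} (hKu : Ku = -(1 / 2 : ℝ) • (Bᵀ * Rz⁻¹))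
    {Kz : Matrix (Fin h) (Fin l) ℝ} (hKz : Kz = -(1 / (2 * lmin)) • ((Rx⁻¹)ᵀ * Cᵀ))
    (z x : Fin h → ℝ) {ξ : (Fin h ⊕ Fin h) ⊕ Fin k → ℝ}
    (hξ : ξ = Sum.elim (Sum.elim (Rz⁻¹ *ᵥ z) x) (-(Ku *ᵥ z))) :
    2 * (Rx *ᵥ x ⬝ᵥ (A + lam • (Kz * C)) *ᵥ x) +
        2 * (Rz⁻¹ *ᵥ z ⬝ᵥ ((A + B * Ku) *ᵥ z + lam • (Kz * C) *ᵥ x)) =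
      ξ ⬝ᵥ Theta A Rx Rz B C M lmin lam *ᵥ ξ - Ku *ᵥ z ⬝ᵥ M *ᵥ (Ku *ᵥ z)
        - (lam / lmin - 1) * (C *ᵥ x ⬝ᵥ C *ᵥ x) := by
  set w := Rz⁻¹ *ᵥ z with hw
  set u := Ku *ᵥ z with hu
  have hz : Rz *ᵥ w = z := by rw [hw, mulVec_mulVec, mul_nonsing_inv Rz hRz, one_mulVec]
  have hBw : Bᵀ *ᵥ w = (-2 : ℝ) • u := by
    rw [hu, hKu, smul_mulVec, smul_smul, ← mulVec_mulVec, ← hw]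
    norm_num
  have hBu : w ⬝ᵥ B *ᵥ u = -2 * (u ⬝ᵥ u) := by
    rw [dotProduct_mulVec, ← mulVec_transpose, hBw, smul_dotProduct, smul_eq_mul]
  have hKzC (v : Fin h → ℝ) :
      v ⬝ᵥ (Kz * C) *ᵥ x = -(1 / (2 * lmin)) * (C *ᵥ (Rx⁻¹ *ᵥ v) ⬝ᵥ C *ᵥ x) := by
    rw [hKz, Matrix.smul_mul, smul_mulVec, dotProduct_smul, smul_eq_mul, ← transpose_mul,
      ← mulVec_mulVec, dotProduct_transpose_mulVec, dotProduct_comm, ← mulVec_mulVec]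
  have hRx_cancel : Rx⁻¹ *ᵥ (Rx *ᵥ x) = x := by
    rw [mulVec_mulVec, nonsing_inv_mul Rx hRx, one_mulVec]
  rw [hξ, dotProduct_Theta_mulVec, hz, hBw]
  simp only [add_mulVec, smul_mulVec, ← mulVec_mulVec _ B, hKzC, ← hu, dotProduct_add,
    dotProduct_smul, smul_dotProduct, dotProduct_neg, neg_dotProduct, mulVec_neg, smul_eq_mul,
    hBu, hRx_cancel]
  ring

end PowerBalance

theorem stmt11_general {h k l : ℕ} {E A Rx Rz : Matrix (Fin h) (Fin h) ℝ}
    {B : Matrix (Fin h) (Fin k) ℝ} {C : Matrix (Fin l) (Fin h) ℝ} {M : Matrix (Fin k) (Fin k) ℝ}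
    {lmin lam : ℝ} (hRx : IsUnit Rx.det) (hRz : IsUnit Rz.det)
    (hlmin : 0 < lmin) (hlam : lmin ≤ lam)
    {Ku : Matrix (Fin k) (Fin h) ℝ} (hKu : Ku = -(1 / 2 : ℝ) • (Bᵀ * Rz⁻¹))
    {Kz : Matrix (Fin h) (Fin l) ℝ} (hKz : Kz = -(1 / (2 * lmin)) • ((Rx⁻¹)ᵀ * Cᵀ))
    (hERx : Eᵀ * Rx = Rxᵀ * E) (hERz : Rzᵀ * Eᵀ = E * Rz)
    (hTheta : (-Theta A Rx Rz B C M lmin lam).PosSemidef)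
    {zhat xhat : ℝ → Fin h → ℝ} {t : ℝ}
    (hz : DifferentiableAt ℝ zhat t) (hx : DifferentiableAt ℝ xhat t)
    (hzeq : E *ᵥ deriv zhat t = (A + B * Ku) *ᵥ zhat t + lam • (Kz * C) *ᵥ xhat t)
    (hxeq : E *ᵥ deriv xhat t = (A + lam • (Kz * C)) *ᵥ xhat t)
    {V : ℝ → ℝ}
    (hV : V = fun s ↦ xhat s ⬝ᵥ (Eᵀ * Rx) *ᵥ xhat s + zhat s ⬝ᵥ (Eᵀ * Rz⁻¹) *ᵥ zhat s) :
    DifferentiableAt ℝ V t ∧ deriv V t ≤ -(Ku *ᵥ zhat t ⬝ᵥ M *ᵥ (Ku *ᵥ zhat t)) := by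
  have hxsymm : (Eᵀ * Rx).IsSymm := by
    rw [Matrix.IsSymm, transpose_mul, transpose_transpose, hERx]
  have hzsymm : (Eᵀ * Rz⁻¹).IsSymm :=
    isSymm_transpose_mul_inv hRz (by rw [Matrix.IsSymm, transpose_mul, hERz])
  have hderiv : HasDerivAt V
      (2 * (Rx *ᵥ xhat t ⬝ᵥ E *ᵥ deriv xhat t) +
        2 * (Rz⁻¹ *ᵥ zhat t ⬝ᵥ E *ᵥ deriv zhat t)) t := by
    rw [hV]
    exact (hasDerivAt_dotProduct_transpose_mul_mulVec_self hxsymm hx.hasDerivAt).add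
      (hasDerivAt_dotProduct_transpose_mul_mulVec_self hzsymm hz.hasDerivAt)
  refine ⟨hderiv.differentiableAt, ?_⟩
  set ξ := Sum.elim (Sum.elim (Rz⁻¹ *ᵥ zhat t) (xhat t)) (-(Ku *ᵥ zhat t)) with hξ
  have hform : ξ ⬝ᵥ Theta A Rx Rz B C M lmin lam *ᵥ ξ ≤ 0 := by
    simpa only [star_trivial, neg_mulVec, dotProduct_neg, neg_nonneg] using
      hTheta.dotProduct_mulVec_nonneg ξ
  have hexcess : 0 ≤ (lam / lmin - 1) * (C *ᵥ xhat t ⬝ᵥ C *ᵥ xhat t) :=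
    mul_nonneg (sub_nonneg.2 ((one_le_div hlmin).2 hlam)) (dotProduct_star_self_nonneg _)
  rw [hderiv.deriv, hxeq, hzeq, storage_rate_eq_Theta_form_sub hRx hRz hKu hKz _ _ hξ]
  exact (sub_le_self _ hexcess).trans ((sub_le_sub_right hform _).trans_eq (zero_sub _))

/-- Dissipation inequality at the core of the paper's Theorem 2: along any trajectory
of the transformed closed-loop descriptor dynamics (7) with parameter `λ`, the Lyapunov
function `V(t) = x̂ᵀ(EᵀR_x)x̂ + ẑᵀ(EᵀR_z⁻¹)ẑ` is differentiable and its derivative is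
dominated by minus the control energy rate. -/
theorem stmt11 (h k l : ℕ)
    (E A Rx Rz : Matrix (Fin h) (Fin h) ℝ)
    (hRx : IsUnit Rx.det) (hRz : IsUnit Rz.det)
    (B : Matrix (Fin h) (Fin k) ℝ) (C : Matrix (Fin l) (Fin h) ℝ)
    (M : Matrix (Fin k) (Fin k) ℝ) (hMsym : M.IsSymm) (hM : M.PosDef)
    (lmin lam : ℝ) (hlmin : 0 < lmin) (hlam : lmin ≤ lam)
    (Ku : Matrix (Fin k) (Fin h) ℝ) (hKu : Ku = -(1 / 2 : ℝ) • (Bᵀ * Rz⁻¹))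
    (Kz : Matrix (Fin h) (Fin l) ℝ) (hKz : Kz = -(1 / (2 * lmin)) • ((Rx⁻¹)ᵀ * Cᵀ))
    (h1 : Eᵀ * Rx = Rxᵀ * E) (h2 : (Eᵀ * Rx).PosSemidef)
    (h3 : Rzᵀ * Eᵀ = E * Rz) (h4 : (E * Rz).PosSemidef)
    (hTheta : (-(Theta A Rx Rz B C M lmin lam)).PosDef)
    (zhat xhat : ℝ → Fin h → ℝ)
    (hz : Differentiable ℝ zhat) (hx : Differentiable ℝ xhat)
    (hzeq : ∀ t, E.mulVec (deriv zhat t)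
      = (A + B * Ku).mulVec (zhat t) + lam • (Kz * C).mulVec (xhat t))
    (hxeq : ∀ t, E.mulVec (deriv xhat t) = (A + lam • (Kz * C)).mulVec (xhat t))
    (V : ℝ → ℝ)
    (hV : V = fun t => xhat t ⬝ᵥ (Eᵀ * Rx).mulVec (xhat t)
      + zhat t ⬝ᵥ (Eᵀ * Rz⁻¹).mulVec (zhat t)) :
    Differentiable ℝ V ∧
      ∀ t, deriv V t ≤ -(Ku.mulVec (zhat t) ⬝ᵥ M.mulVec (Ku.mulVec (zhat t))) :=
  forall_and.1 fun t ↦ stmt11_general hRx hRz hlmin hlam hKu hKz h1 h3 hTheta.posSemidef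
    (hz t) (hx t) (hzeq t) (hxeq t) hV
end

section
/- Let E, A, R_x, R_z be h×h real matrices with R_x and R_z invertible, B an h×k real matrix, C an l×h real matrix, M a k×k real symmetric positive definite matrix, and 0 < λ_min ≤ λ_max. Set K_u = −(1/2)·Bᵀ·R_z⁻¹ and K_z = −(1/(2λ_min))·R_x⁻ᵀ·Cᵀ. Assume: (i) EᵀR_x = R_xᵀE ⪰ 0; (ii) R_zᵀEᵀ = E·R_z ⪰ 0; (iii) Θ(λ_min) ≺ 0 and Θ(λ_max) ≺ 0, where Θ(μ) is the symmetric 3×3 block matrix with upper blocks Θ₁₁ = A·R_z + R_zᵀAᵀ − B·Bᵀ, Θ₁₂ = −(μ/(2λ_min))·R_x⁻ᵀ·CᵀC, Θ₁₃ = (1/2)·B·M, Θ₂₂ = R_xᵀA + AᵀR_x − CᵀC, Θ₂₃ = 0, Θ₃₃ = −M. Let λ : ℝ → ℝ satisfy λ(t) ∈ [λ_min, λ_max] for all t, and let ẑ, x̂ : ℝ → ℝ^h be differentiable functions satisfying, for all t, E·ẑ′(t) = (A + B·K_u)·ẑ(t) + λ(t)·K_z·C·x̂(t) and E·x̂′(t)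 = (A + λ(t)·K_z·C)·x̂(t). Then V(t) := x̂(t)ᵀ(EᵀR_x)x̂(t) + ẑ(t)ᵀ(Eᵀ·R_z⁻¹)ẑ(t) is nonnegative and nonincreasing on [0, ∞), and for every T ≥ 0 the control energy satisfies ∫₀ᵀ (K_u·ẑ(t))ᵀ·M·(K_u·ẑ(t)) dt ≤ V(0). -/
open Matrix

/-!
Write `w = R_z⁻¹ẑ`, `u = K_u ẑ` and `ξ = (w, x̂, -u)`. The gains are chosen so that along the
closed loop

  `V' + uᵀMu = ξᵀΘ(λ)ξ - (λ/λ_min - 1)‖C x̂‖²`.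

The matrix `Θ(λ)` is affine in `λ`, so it is negative semidefinite on the whole interval
`[λ_min, λ_max]` as soon as it is at the end points, and both terms on the right are nonpositive.
Integrating `V' + uᵀMu ≤ 0` gives the monotonicity of `V` and the energy bound. Here `V'` is the
right derivative, which a piecewise smooth trajectory has at its switching instants too.
-/

open Set

section QuadraticForms

variable {m n : Type*} [Fintype m] [Fintype n]

lemma dotProduct_transpose_mul_mulVec_self (N : Matrix m n ℝ) (v : n → ℝ) :
    v ⬝ᵥ (Nᵀ * N) *ᵥ v = (N *ᵥ v) ⬝ᵥ (N *ᵥ v) := by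
  rw [← mulVec_mulVec, dotProduct_transpose_mulVec]

lemma dotProduct_add_transpose_mulVec_self (N : Matrix n n ℝ) (v : n → ℝ) :
    v ⬝ᵥ (N + Nᵀ) *ᵥ v = 2 * (v ⬝ᵥ N *ᵥ v) := by
  rw [add_mulVec, dotProduct_add, dotProduct_transpose_mulVec, two_mul]

lemma sumElim_dotProduct_fromBlocks_transpose_mulVec (P : Matrix m m ℝ) (Q : Matrix m n ℝ)
    (S : Matrix n n ℝ) (v : m → ℝ) (w : n → ℝ) :
    Sum.elim v w ⬝ᵥ fromBlocks P Q Qᵀ S *ᵥ Sum.elim v w =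
      v ⬝ᵥ P *ᵥ v + 2 * (v ⬝ᵥ Q *ᵥ w) + w ⬝ᵥ S *ᵥ w := by
  simp only [fromBlocks_mulVec, Sum.elim_comp_inl, Sum.elim_comp_inr, sumElim_dotProduct_sumElim,
    dotProduct_add, dotProduct_transpose_mulVec]
  ring

lemma dotProduct_mulVec_comm_of_isSymm {P : Matrix n n ℝ} (hP : P.IsSymm) (v w : n → ℝ) :
    v ⬝ᵥ P *ᵥ w = w ⬝ᵥ P *ᵥ v := by
  rw [← dotProduct_transpose_mulVec, hP.eq]

lemma hasDerivWithinAt_dotProduct_mulVec_self {P : Matrix n n ℝ} (hP : P.IsSymm)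
    {x : ℝ → n → ℝ} {x' : n → ℝ} {s : Set ℝ} {t : ℝ} (hx : HasDerivWithinAt x x' s t) :
    HasDerivWithinAt (fun τ => x τ ⬝ᵥ P *ᵥ x τ) (2 * (x' ⬝ᵥ P *ᵥ x t)) s t := by
  classical
  have hbilin := (toLinearMap₂' ℝ P).toContinuousBilinearMap.hasDerivWithinAt_of_bilinear hx hx
  simp only [LinearMap.toContinuousBilinearMap_apply, toLinearMap₂'_apply'] at hbilin
  rwa [dotProduct_mulVec_comm_of_isSymm hP, ← two_mul] at hbilin

lemma posSemidef_transpose_mul_nonsing_inv [DecidableEq n] {E R : Matrix n n ℝ}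
    (hR : IsUnit R.det) (hER : (E * R).PosSemidef) : (Eᵀ * R⁻¹).PosSemidef := by
  have hcongr : (R⁻¹)ᵀ * (E * R) * R⁻¹ = (R⁻¹)ᵀ * E := by
    rw [Matrix.mul_assoc, Matrix.mul_assoc, mul_nonsing_inv R hR, Matrix.mul_one]
  have hpos := hER.conjTranspose_mul_mul_same R⁻¹
  rw [conjTranspose_eq_transpose_of_trivial, hcongr] at hpos
  simpa only [transpose_mul, transpose_transpose] using hpos.transpose

end QuadraticForms

lemma integral_le_sub_of_rightDeriv_add_nonpos {V V' U : ℝ → ℝ} {a b : ℝ} (hab : a ≤ b)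
    (hV : ContinuousOn V (Icc a b))
    (hV' : ∀ t ∈ Ioo a b, HasDerivWithinAt V (V' t) (Ioi t) t)
    (hU : MeasureTheory.IntegrableOn U (Icc a b)) (hVU : ∀ t ∈ Ioo a b, V' t + U t ≤ 0) :
    ∫ t in a..b, U t ≤ V a - V b := by
  have hle : V b - V a ≤ ∫ t in a..b, -U t :=
    intervalIntegral.sub_le_integral_of_hasDeriv_right_of_le hab hV hV' hU.neg
      fun t ht => by linarith [hVU t ht]
  rw [intervalIntegral.integral_neg] at hle
  linarith

section Gains

variable {n m p : Type*} [Fintype n] [DecidableEq n]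

/-- The state feedback gain `K_u = -½ BᵀR_z⁻¹`. -/
noncomputable def controlGain (B : Matrix n m ℝ) (Rz : Matrix n n ℝ) : Matrix m n ℝ :=
  -(1 / 2 : ℝ) • (Bᵀ * Rz⁻¹)

/-- The output coupling gain `K_z = -(1 / (2λ_min)) R_x⁻ᵀCᵀ`. -/
noncomputable def couplingGain (C : Matrix p n ℝ) (Rx : Matrix n n ℝ) (lmin : ℝ) : Matrix n p ℝ :=
  -(1 / (2 * lmin)) • ((Rx⁻¹)ᵀ * Cᵀ)

lemma dotProduct_mul_controlGain_mulVec [Fintype m] (B : Matrix n m ℝ) (Rz : Matrix n n ℝ)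
    (z : n → ℝ) :
    (Rz⁻¹ *ᵥ z) ⬝ᵥ (B * controlGain B Rz) *ᵥ z =
      -(1 / 2) * ((Bᵀ *ᵥ (Rz⁻¹ *ᵥ z)) ⬝ᵥ (Bᵀ *ᵥ (Rz⁻¹ *ᵥ z))) := by
  rw [← dotProduct_transpose_mul_mulVec_self, transpose_transpose, controlGain, Matrix.mul_smul,
    smul_mulVec, dotProduct_smul, smul_eq_mul]
  simp only [mulVec_mulVec, Matrix.mul_assoc]

lemma dotProduct_couplingGain_mul_mulVec [Fintype p] (C : Matrix p n ℝ) (Rx : Matrix n n ℝ)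
    (lmin : ℝ) (v x : n → ℝ) :
    v ⬝ᵥ (couplingGain C Rx lmin * C) *ᵥ x =
      -(1 / (2 * lmin)) * (v ⬝ᵥ ((Rx⁻¹)ᵀ * (Cᵀ * C)) *ᵥ x) := by
  rw [couplingGain, smul_mul, smul_mulVec, dotProduct_smul, Matrix.mul_assoc, smul_eq_mul]

lemma dotProduct_couplingGain_mul_mulVec_self [Fintype p] (C : Matrix p n ℝ) {Rx : Matrix n n ℝ}
    (hRx : IsUnit Rx.det) (lmin : ℝ) (x : n → ℝ) :
    (Rx *ᵥ x) ⬝ᵥ (couplingGain C Rx lmin * C) *ᵥ x =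
      -(1 / (2 * lmin)) * ((C *ᵥ x) ⬝ᵥ (C *ᵥ x)) := by
  rw [dotProduct_couplingGain_mul_mulVec, ← mulVec_mulVec, dotProduct_transpose_mulVec,
    mulVec_mulVec, nonsing_inv_mul Rx hRx, one_mulVec, dotProduct_comm,
    dotProduct_transpose_mul_mulVec_self]

end Gains

section Storage

variable {n : Type*} [Fintype n] [DecidableEq n] {E Rx Rz : Matrix n n ℝ}

/-- The Lyapunov function `V = xᵀ(EᵀR_x)x + zᵀ(EᵀR_z⁻¹)z` as a function of the state. -/
noncomputable def storage (E Rx Rz : Matrix n n ℝ) (x z : n → ℝ) : ℝ :=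
  x ⬝ᵥ (Eᵀ * Rx) *ᵥ x + z ⬝ᵥ (Eᵀ * Rz⁻¹) *ᵥ z

lemma storage_nonneg (hx : (Eᵀ * Rx).PosSemidef) (hz : (Eᵀ * Rz⁻¹).PosSemidef) (x z : n → ℝ) :
    0 ≤ storage E Rx Rz x z :=
  add_nonneg (hx.dotProduct_mulVec_nonneg x) (hz.dotProduct_mulVec_nonneg z)

lemma continuous_storage (E Rx Rz : Matrix n n ℝ) :
    Continuous fun q : (n → ℝ) × (n → ℝ) => storage E Rx Rz q.1 q.2 := by
  unfold storage
  fun_prop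

lemma hasDerivWithinAt_storage (hEx : (Eᵀ * Rx).IsSymm) (hEz : (Eᵀ * Rz⁻¹).IsSymm)
    {x z : ℝ → n → ℝ} {x' z' : n → ℝ} {s : Set ℝ} {t : ℝ}
    (hx : HasDerivWithinAt x x' s t) (hz : HasDerivWithinAt z z' s t) :
    HasDerivWithinAt (fun τ => storage E Rx Rz (x τ) (z τ))
      (2 * ((Rx *ᵥ x t) ⬝ᵥ E *ᵥ x') + 2 * ((Rz⁻¹ *ᵥ z t) ⬝ᵥ E *ᵥ z')) s t := by
  rw [← dotProduct_transpose_mulVec E, ← dotProduct_transpose_mulVec E, mulVec_mulVec,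
    mulVec_mulVec]
  exact (hasDerivWithinAt_dotProduct_mulVec_self hEx hx).add
    (hasDerivWithinAt_dotProduct_mulVec_self hEz hz)

end Storage

section LinearMatrixInequality

variable {h k l : ℕ} {A Rx Rz : Matrix (Fin h) (Fin h) ℝ} {B : Matrix (Fin h) (Fin k) ℝ}
  {C : Matrix (Fin l) (Fin h) ℝ} {M : Matrix (Fin k) (Fin k) ℝ} {lmin : ℝ}

lemma theta_convexCombination {a b : ℝ} (hab : a + b = 1) (mu nu : ℝ) :
    Theta A Rx Rz B C M lmin (a * mu + b * nu) =
      a • Theta A Rx Rz B C M lmin mu + b • Theta A Rx Rz B C M lmin nu := by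
  obtain rfl : b = 1 - a := by linarith
  ext ((i | i) | i) ((j | j) | j) <;> simp [Theta] <;> ring

lemma convex_setOf_posSemidef_neg_theta :
    Convex ℝ {mu | (-Theta A Rx Rz B C M lmin mu).PosSemidef} := by
  intro mu hmu nu hnu a b ha hb hab
  have hcomb := (hmu.smul ha).add (hnu.smul hb)
  rwa [smul_neg, smul_neg, ← neg_add, ← theta_convexCombination hab] at hcomb

lemma posSemidef_of_posSemidef_neg_theta {mu : ℝ}
    (hTheta : (-Theta A Rx Rz B C M lmin mu).PosSemidef) : M.PosSemidef := by
  convert hTheta.submatrix Sum.inr using 1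
  ext i j
  simp [Theta]

lemma dotProduct_theta_mulVec_self (mu : ℝ) (w x : Fin h → ℝ) (v : Fin k → ℝ) :
    Sum.elim (Sum.elim w x) v ⬝ᵥ Theta A Rx Rz B C M lmin mu *ᵥ Sum.elim (Sum.elim w x) v =
      2 * (w ⬝ᵥ A *ᵥ (Rz *ᵥ w)) - (Bᵀ *ᵥ w) ⬝ᵥ (Bᵀ *ᵥ w)
        - mu / lmin * (w ⬝ᵥ ((Rx⁻¹)ᵀ * (Cᵀ * C)) *ᵥ x)
        + 2 * ((Rx *ᵥ x) ⬝ᵥ A *ᵥ x) - (C *ᵥ x) ⬝ᵥ (C *ᵥ x)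
        + (Bᵀ *ᵥ w) ⬝ᵥ M *ᵥ v - v ⬝ᵥ M *ᵥ v := by
  have hw : w ⬝ᵥ (A * Rz + Rzᵀ * Aᵀ - B * Bᵀ) *ᵥ w =
      2 * (w ⬝ᵥ A *ᵥ (Rz *ᵥ w)) - (Bᵀ *ᵥ w) ⬝ᵥ (Bᵀ *ᵥ w) := by
    rw [← transpose_mul, sub_mulVec, dotProduct_sub, dotProduct_add_transpose_mulVec_self,
      ← dotProduct_transpose_mul_mulVec_self, transpose_transpose, mulVec_mulVec]
  have hx : x ⬝ᵥ (Rxᵀ * A + Aᵀ * Rx - Cᵀ * C) *ᵥ x =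
      2 * ((Rx *ᵥ x) ⬝ᵥ A *ᵥ x) - (C *ᵥ x) ⬝ᵥ (C *ᵥ x) := by
    have htranspose : Aᵀ * Rx = (Rxᵀ * A)ᵀ := by rw [transpose_mul, transpose_transpose]
    rw [htranspose, sub_mulVec, dotProduct_sub, dotProduct_add_transpose_mulVec_self,
      dotProduct_transpose_mul_mulVec_self, ← mulVec_mulVec, dotProduct_transpose_mulVec,
      dotProduct_comm]
  have hwv : w ⬝ᵥ (B * M) *ᵥ v = (Bᵀ *ᵥ w) ⬝ᵥ M *ᵥ v := by
    rw [← mulVec_mulVec, dotProduct_mulVec, ← mulVec_transpose]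
  have hcols : fromCols ((1 / 2 : ℝ) • (B * M))ᵀ (0 : Matrix (Fin k) (Fin h) ℝ) =
      (fromRows ((1 / 2 : ℝ) • (B * M)) 0)ᵀ := by
    rw [transpose_fromRows, transpose_zero]
  rw [Theta, hcols, sumElim_dotProduct_fromBlocks_transpose_mulVec,
    sumElim_dotProduct_fromBlocks_transpose_mulVec, hw, hx, fromRows_mulVec,
    sumElim_dotProduct_sumElim]
  simp only [smul_mulVec, neg_mulVec, zero_mulVec, dotProduct_smul, dotProduct_neg,
    dotProduct_zero, smul_eq_mul, hwv]
  ring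

end LinearMatrixInequality

section Dissipation

variable {h k l : ℕ} {E A Rx Rz : Matrix (Fin h) (Fin h) ℝ} {B : Matrix (Fin h) (Fin k) ℝ}
  {C : Matrix (Fin l) (Fin h) ℝ} {M : Matrix (Fin k) (Fin k) ℝ} {lmin mu : ℝ}
  {x z x' z' : Fin h → ℝ}

lemma storage_rate_add_control_eq (hRx : IsUnit Rx.det) (hRz : IsUnit Rz.det)
    (hz : E *ᵥ z' = (A + B * controlGain B Rz) *ᵥ z + mu • (couplingGain C Rx lmin * C) *ᵥ x)
    (hx : E *ᵥ x' = (A + mu • (couplingGain C Rx lmin * C)) *ᵥ x) :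
    2 * ((Rx *ᵥ x) ⬝ᵥ E *ᵥ x') + 2 * ((Rz⁻¹ *ᵥ z) ⬝ᵥ E *ᵥ z')
        + (controlGain B Rz *ᵥ z) ⬝ᵥ M *ᵥ (controlGain B Rz *ᵥ z) =
      Sum.elim (Sum.elim (Rz⁻¹ *ᵥ z) x) (-(controlGain B Rz *ᵥ z)) ⬝ᵥ
          Theta A Rx Rz B C M lmin mu *ᵥ
            Sum.elim (Sum.elim (Rz⁻¹ *ᵥ z) x) (-(controlGain B Rz *ᵥ z))
        - (mu / lmin - 1) * ((C *ᵥ x) ⬝ᵥ (C *ᵥ x)) := by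
  have hxrate : (Rx *ᵥ x) ⬝ᵥ E *ᵥ x' =
      (Rx *ᵥ x) ⬝ᵥ A *ᵥ x - mu / (2 * lmin) * ((C *ᵥ x) ⬝ᵥ (C *ᵥ x)) := by
    rw [hx, add_mulVec, smul_mulVec, dotProduct_add, dotProduct_smul, smul_eq_mul,
      dotProduct_couplingGain_mul_mulVec_self C hRx]
    ring
  have hzrate : (Rz⁻¹ *ᵥ z) ⬝ᵥ E *ᵥ z' =
      (Rz⁻¹ *ᵥ z) ⬝ᵥ A *ᵥ z
        - 1 / 2 * ((Bᵀ *ᵥ (Rz⁻¹ *ᵥ z)) ⬝ᵥ (Bᵀ *ᵥ (Rz⁻¹ *ᵥ z)))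
        - mu / (2 * lmin) * ((Rz⁻¹ *ᵥ z) ⬝ᵥ ((Rx⁻¹)ᵀ * (Cᵀ * C)) *ᵥ x) := by
    rw [hz, add_mulVec, dotProduct_add, dotProduct_add, dotProduct_smul, smul_eq_mul,
      dotProduct_mul_controlGain_mulVec, dotProduct_couplingGain_mul_mulVec]
    ring
  have hRz_cancel : Rz *ᵥ (Rz⁻¹ *ᵥ z) = z := by
    rw [mulVec_mulVec, mul_nonsing_inv Rz hRz, one_mulVec]
  have hcontrol : Bᵀ *ᵥ (Rz⁻¹ *ᵥ z) = -(2 : ℝ) • (controlGain B Rz *ᵥ z) := by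
    rw [controlGain, smul_mulVec, smul_smul, mulVec_mulVec]
    norm_num
  have hcross : (Bᵀ *ᵥ (Rz⁻¹ *ᵥ z)) ⬝ᵥ M *ᵥ (controlGain B Rz *ᵥ z) =
      -2 * ((controlGain B Rz *ᵥ z) ⬝ᵥ M *ᵥ (controlGain B Rz *ᵥ z)) := by
    rw [hcontrol, smul_dotProduct, smul_eq_mul]
  rw [dotProduct_theta_mulVec_self, hxrate, hzrate, hRz_cancel, mulVec_neg, dotProduct_neg,
    dotProduct_neg, neg_dotProduct, hcross]
  ring

lemma storage_rate_add_control_nonpos (hRx : IsUnit Rx.det) (hRz : IsUnit Rz.det)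
    (hlmin : 0 < lmin) (hmu : lmin ≤ mu) (hTheta : (-Theta A Rx Rz B C M lmin mu).PosSemidef)
    (hz : E *ᵥ z' = (A + B * controlGain B Rz) *ᵥ z + mu • (couplingGain C Rx lmin * C) *ᵥ x)
    (hx : E *ᵥ x' = (A + mu • (couplingGain C Rx lmin * C)) *ᵥ x) :
    2 * ((Rx *ᵥ x) ⬝ᵥ E *ᵥ x') + 2 * ((Rz⁻¹ *ᵥ z) ⬝ᵥ E *ᵥ z')
      + (controlGain B Rz *ᵥ z) ⬝ᵥ M *ᵥ (controlGain B Rz *ᵥ z) ≤ 0 := by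
  have hform := hTheta.dotProduct_mulVec_nonneg
    (Sum.elim (Sum.elim (Rz⁻¹ *ᵥ z) x) (-(controlGain B Rz *ᵥ z)))
  rw [star_trivial, neg_mulVec, dotProduct_neg] at hform
  have hratio : 0 ≤ mu / lmin - 1 := sub_nonneg.2 ((one_le_div hlmin).2 hmu)
  have houtput : 0 ≤ (C *ᵥ x) ⬝ᵥ (C *ᵥ x) := dotProduct_star_self_nonneg (C *ᵥ x)
  rw [storage_rate_add_control_eq hRx hRz hz hx]
  linarith [mul_nonneg hratio houtput]

end Dissipation

theorem stmt12_general {h k l : ℕ} {E A Rx Rz : Matrix (Fin h) (Fin h) ℝ}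
    {B : Matrix (Fin h) (Fin k) ℝ} {C : Matrix (Fin l) (Fin h) ℝ} {M : Matrix (Fin k) (Fin k) ℝ}
    {lmin lmax : ℝ} (hRx : IsUnit Rx.det) (hRz : IsUnit Rz.det) (hlmin : 0 < lmin)
    (hEx : (Eᵀ * Rx).PosSemidef) (hEz : (E * Rz).PosSemidef)
    (hThmin : (-Theta A Rx Rz B C M lmin lmin).PosSemidef)
    (hThmax : (-Theta A Rx Rz B C M lmin lmax).PosSemidef)
    {lam : ℝ → ℝ} (hlam : ∀ t > 0, lam t ∈ Icc lmin lmax)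
    {z x z' x' : ℝ → Fin h → ℝ} (hzc : ContinuousOn z (Ici 0)) (hxc : ContinuousOn x (Ici 0))
    (hz : ∀ t > 0, HasDerivWithinAt z (z' t) (Ioi t) t)
    (hx : ∀ t > 0, HasDerivWithinAt x (x' t) (Ioi t) t)
    (hzeq : ∀ t > 0, E *ᵥ z' t =
      (A + B * controlGain B Rz) *ᵥ z t + lam t • (couplingGain C Rx lmin * C) *ᵥ x t)
    (hxeq : ∀ t > 0, E *ᵥ x' t = (A + lam t • (couplingGain C Rx lmin * C)) *ᵥ x t) :
    (∀ t, 0 ≤ storage E Rx Rz (x t) (z t)) ∧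
      AntitoneOn (fun t => storage E Rx Rz (x t) (z t)) (Ici 0) ∧
      ∀ T, 0 ≤ T →
        ∫ t in (0 : ℝ)..T, (controlGain B Rz *ᵥ z t) ⬝ᵥ M *ᵥ (controlGain B Rz *ᵥ z t) ≤
          storage E Rx Rz (x 0) (z 0) := by
  have hEzinv := posSemidef_transpose_mul_nonsing_inv hRz hEz
  have hM := posSemidef_of_posSemidef_neg_theta hThmin
  have hnonneg t := storage_nonneg hEx hEzinv (x t) (z t)
  have hcont : ContinuousOn (fun t => storage E Rx Rz (x t) (z t)) (Ici 0) :=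
    (continuous_storage E Rx Rz).comp_continuousOn (hxc.prodMk hzc)
  have hpower : ContinuousOn
      (fun t => (controlGain B Rz *ᵥ z t) ⬝ᵥ M *ᵥ (controlGain B Rz *ᵥ z t)) (Ici 0) :=
    (by fun_prop : Continuous fun v : Fin h → ℝ =>
      (controlGain B Rz *ᵥ v) ⬝ᵥ M *ᵥ (controlGain B Rz *ᵥ v)).comp_continuousOn hzc
  have henergy {a b : ℝ} (ha : 0 ≤ a) (hab : a ≤ b) :
      ∫ t in a..b, (controlGain B Rz *ᵥ z t) ⬝ᵥ M *ᵥ (controlGain B Rz *ᵥ z t) ≤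
        storage E Rx Rz (x a) (z a) - storage E Rx Rz (x b) (z b) := by
    have hsubset : Icc a b ⊆ Ici 0 := fun t ht => ha.trans ht.1
    refine integral_le_sub_of_rightDeriv_add_nonpos hab (hcont.mono hsubset)
      (fun t ht => hasDerivWithinAt_storage (isHermitian_iff_isSymm.1 hEx.isHermitian)
        (isHermitian_iff_isSymm.1 hEzinv.isHermitian) (hx t (ha.trans_lt ht.1))
        (hz t (ha.trans_lt ht.1)))
      (hpower.mono hsubset).integrableOn_Icc fun t ht => ?_
    have ht₀ : 0 < t := ha.trans_lt ht.1
    have hTheta := convex_setOf_posSemidef_neg_theta.ordConnected.out hThmin hThmax (hlam t ht₀)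
    exact storage_rate_add_control_nonpos hRx hRz hlmin (hlam t ht₀).1 hTheta (hzeq t ht₀)
      (hxeq t ht₀)
  refine ⟨hnonneg, fun a ha b _ hab => ?_, fun T hT => ?_⟩
  · exact sub_nonneg.1 <| (intervalIntegral.integral_nonneg hab fun t _ =>
      hM.dotProduct_mulVec_nonneg (controlGain B Rz *ᵥ z t)).trans (henergy ha hab)
  · exact (henergy le_rfl hT).trans (sub_le_self _ (hnonneg T))

/-- Trajectory-wise energy bound of the paper's Theorem 2: for the switched closed-loop
dynamics with time-varying parameter `λ(t) ∈ [λ_min, λ_max]`, the Lyapunov function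
`V(t) = x̂ᵀ(EᵀR_x)x̂ + ẑᵀ(EᵀR_z⁻¹)ẑ` is nonnegative and nonincreasing on `[0, ∞)`,
and the control energy up to any time `T ≥ 0` is bounded by `V(0)`. -/
theorem stmt12 (h k l : ℕ)
    (E A Rx Rz : Matrix (Fin h) (Fin h) ℝ)
    (hRx : IsUnit Rx.det) (hRz : IsUnit Rz.det)
    (B : Matrix (Fin h) (Fin k) ℝ) (C : Matrix (Fin l) (Fin h) ℝ)
    (M : Matrix (Fin k) (Fin k) ℝ) (hMsym : M.IsSymm) (hM : M.PosDef)
    (lmin lmax : ℝ) (hlmin : 0 < lmin) (hle : lmin ≤ lmax)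
    (Ku : Matrix (Fin k) (Fin h) ℝ) (hKu : Ku = -(1 / 2 : ℝ) • (Bᵀ * Rz⁻¹))
    (Kz : Matrix (Fin h) (Fin l) ℝ) (hKz : Kz = -(1 / (2 * lmin)) • ((Rx⁻¹)ᵀ * Cᵀ))
    (h1 : Eᵀ * Rx = Rxᵀ * E) (h2 : (Eᵀ * Rx).PosSemidef)
    (h3 : Rzᵀ * Eᵀ = E * Rz) (h4 : (E * Rz).PosSemidef)
    (hThmin : (-(Theta A Rx Rz B C M lmin lmin)).PosDef)
    (hThmax : (-(Theta A Rx Rz B C M lmin lmax)).PosDef)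
    (lam : ℝ → ℝ) (hlam : ∀ t, lam t ∈ Set.Icc lmin lmax)
    (zhat xhat : ℝ → Fin h → ℝ)
    (hz : Differentiable ℝ zhat) (hx : Differentiable ℝ xhat)
    (hzeq : ∀ t, E.mulVec (deriv zhat t)
      = (A + B * Ku).mulVec (zhat t) + lam t • (Kz * C).mulVec (xhat t))
    (hxeq : ∀ t, E.mulVec (deriv xhat t) = (A + lam t • (Kz * C)).mulVec (xhat t))
    (V : ℝ → ℝ)
    (hV : V = fun t => xhat t ⬝ᵥ (Eᵀ * Rx).mulVec (xhat t)
      + zhat t ⬝ᵥ (Eᵀ * Rz⁻¹).mulVec (zhat t)) :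
    (∀ t ∈ Set.Ici (0 : ℝ), 0 ≤ V t) ∧
      AntitoneOn V (Set.Ici (0 : ℝ)) ∧
      ∀ T : ℝ, 0 ≤ T →
        (∫ t in (0 : ℝ)..T, Ku.mulVec (zhat t) ⬝ᵥ M.mulVec (Ku.mulVec (zhat t))) ≤ V 0 := by
  subst hKu hKz hV
  exact (stmt12_general hRx hRz hlmin h2 h4 hThmin.posSemidef hThmax.posSemidef
    (fun t _ => hlam t) hz.continuous.continuousOn hx.continuous.continuousOn
    (fun t _ => (hz t).hasDerivAt.hasDerivWithinAt) (fun t _ => (hx t).hasDerivAt.hasDerivWithinAt)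
    (fun t _ => hzeq t) (fun t _ => hxeq t)).imp_left fun hnonneg t _ => hnonneg t
end
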